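/- Let Ω be a finite scenario set with probability weights p : Ω → ℝ satisfying p_ω ≥ 0 and Σ_ω p_ω = 1, let L¹, L² : Ω → ℝ, and let α ∈ [0,1). Then CVaR is subadditive: CVaR_α(L¹ + L²) ≤ CVaR_α(L¹) + CVaR_α(L²), where (L¹ + L²)_ω = L¹_ω + L²_ω. -/

import Mathlib

/-!
The Rockafellar–Uryasev function is jointly subadditive in the loss and the threshold, because
`x ↦ max x 0` is subadditive. Evaluating it for the loss `X + Y` at the threshold `θ₁ + θ₂`
therefore bounds `CVaR (X + Y)` by the sum of the values for `X` at `θ₁` and for `Y` at `θ₂`, and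
it remains to take the infimum over `θ₁` and `θ₂`. The expected loss bounds the Rockafellar–Uryasev
function from below, so these infima are not the junk value of `⨅` on an unbounded family.
-/

open MeasureTheory

section ConditionalValueAtRisk

variable {Ω : Type*} [MeasurableSpace Ω]

/-- The Rockafellar–Uryasev function `θ + (1 - α)⁻¹ 𝔼[(X - θ)⁺]` of a loss `X` at the confidence
level `α`, whose infimum over the threshold `θ` is the conditional value-at-risk. -/
noncomputable def rockafellarUryasev (μ : Measure Ω) (α : ℝ) (X : Ω → ℝ) (θ : ℝ) : ℝ :=
  θ + (1 - α)⁻¹ * ∫ ω, max (X ω - θ) 0 ∂μ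

/-- The conditional value-at-risk (expected shortfall) of a loss `X` at the confidence level `α`,
in its variational form. The infimum is taken in `ℝ`, so it is meaningful for integrable `X` under
a probability measure and `0 ≤ α < 1`. -/
noncomputable def cvar (μ : Measure Ω) (α : ℝ) (X : Ω → ℝ) : ℝ :=
  ⨅ θ, rockafellarUryasev μ α X θ

variable {μ : Measure Ω} {α : ℝ} {X Y : Ω → ℝ}

lemma integrable_max_sub_const_zero [IsFiniteMeasure μ] (hX : Integrable X μ) (θ : ℝ) :
    Integrable (fun ω ↦ max (X ω - θ) 0) μ :=
  (hX.sub (integrable_const θ)).pos_part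

lemma integral_max_add_sub_add_le [IsFiniteMeasure μ] (hX : Integrable X μ) (hY : Integrable Y μ)
    (θ₁ θ₂ : ℝ) :
    ∫ ω, max (X ω + Y ω - (θ₁ + θ₂)) 0 ∂μ ≤
      ∫ ω, max (X ω - θ₁) 0 ∂μ + ∫ ω, max (Y ω - θ₂) 0 ∂μ := by
  have hX' := integrable_max_sub_const_zero hX θ₁
  have hY' := integrable_max_sub_const_zero hY θ₂
  rw [← integral_add hX' hY']
  refine integral_mono (integrable_max_sub_const_zero (hX.add hY) _) (hX'.add hY') fun ω ↦ ?_
  simpa only [add_sub_add_comm, add_zero] using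
    max_add_add_le_max_add_max (a := X ω - θ₁) (b := Y ω - θ₂) (c := (0 : ℝ)) (d := 0)

lemma rockafellarUryasev_add_le [IsFiniteMeasure μ] (hα : α ≤ 1) (hX : Integrable X μ)
    (hY : Integrable Y μ) (θ₁ θ₂ : ℝ) :
    rockafellarUryasev μ α (fun ω ↦ X ω + Y ω) (θ₁ + θ₂) ≤
      rockafellarUryasev μ α X θ₁ + rockafellarUryasev μ α Y θ₂ := by
  have hc : 0 ≤ (1 - α)⁻¹ := inv_nonneg.2 (sub_nonneg.2 hα)
  calc rockafellarUryasev μ α (fun ω ↦ X ω + Y ω) (θ₁ + θ₂)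
    _ ≤ θ₁ + θ₂ + (1 - α)⁻¹ * (∫ ω, max (X ω - θ₁) 0 ∂μ + ∫ ω, max (Y ω - θ₂) 0 ∂μ) :=
      add_le_add le_rfl (mul_le_mul_of_nonneg_left (integral_max_add_sub_add_le hX hY θ₁ θ₂) hc)
    _ = rockafellarUryasev μ α X θ₁ + rockafellarUryasev μ α Y θ₂ := by
      unfold rockafellarUryasev
      ring

lemma integral_le_rockafellarUryasev [IsProbabilityMeasure μ] (hα₀ : 0 ≤ α) (hα₁ : α < 1)
    (hX : Integrable X μ) (θ : ℝ) : ∫ ω, X ω ∂μ ≤ rockafellarUryasev μ α X θ := by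
  have hc : 1 ≤ (1 - α)⁻¹ := (one_le_inv₀ (sub_pos.2 hα₁)).2 (sub_le_self 1 hα₀)
  have hexcess : 0 ≤ ∫ ω, max (X ω - θ) 0 ∂μ := integral_nonneg fun _ ↦ le_max_right _ _
  calc ∫ ω, X ω ∂μ
    _ = θ + ∫ ω, (X ω - θ) ∂μ := by
      rw [integral_sub hX (integrable_const θ), integral_const, probReal_univ, one_smul,
        add_sub_cancel]
    _ ≤ θ + ∫ ω, max (X ω - θ) 0 ∂μ :=
      add_le_add le_rfl <| integral_mono (hX.sub (integrable_const θ))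
        (integrable_max_sub_const_zero hX θ) fun _ ↦ le_max_left _ _
    _ ≤ rockafellarUryasev μ α X θ :=
      add_le_add le_rfl (le_mul_of_one_le_left hexcess hc)

lemma bddBelow_range_rockafellarUryasev [IsProbabilityMeasure μ] (hα₀ : 0 ≤ α) (hα₁ : α < 1)
    (hX : Integrable X μ) : BddBelow (Set.range (rockafellarUryasev μ α X)) :=
  ⟨∫ ω, X ω ∂μ, Set.forall_mem_range.2 (integral_le_rockafellarUryasev hα₀ hα₁ hX)⟩

theorem cvar_subadditive_general [IsProbabilityMeasure μ] (hα₀ : 0 ≤ α) (hα₁ : α < 1)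
    (hX : Integrable X μ) (hY : Integrable Y μ) :
    cvar μ α (fun ω ↦ X ω + Y ω) ≤ cvar μ α X + cvar μ α Y :=
  le_ciInf_add_ciInf fun θ₁ θ₂ ↦
    ciInf_le_of_le (bddBelow_range_rockafellarUryasev hα₀ hα₁ (hX.add hY)) (θ₁ + θ₂)
      (rockafellarUryasev_add_le hα₁.le hX hY θ₁ θ₂)

end ConditionalValueAtRisk

section FiniteScenarios

variable {ι : Type*} [Fintype ι] {p : ι → ℝ}

/-- The probability distribution on a finite scenario set with the real weights `p`; it makes
weighted sums available as integrals. -/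
noncomputable def weightPMF (hp : ∀ i, 0 ≤ p i) (hsum : ∑ i, p i = 1) : PMF ι :=
  PMF.ofFintype (fun i ↦ ENNReal.ofReal (p i)) <| by
    rw [← ENNReal.ofReal_sum_of_nonneg fun i _ ↦ hp i, hsum, ENNReal.ofReal_one]

lemma integral_weightPMF [MeasurableSpace ι] [MeasurableSingletonClass ι] {E : Type*}
    [NormedAddCommGroup E] [NormedSpace ℝ E] [CompleteSpace E] (hp : ∀ i, 0 ≤ p i)
    (hsum : ∑ i, p i = 1) (f : ι → E) :
    ∫ i, f i ∂(weightPMF hp hsum).toMeasure = ∑ i, p i • f i := by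
  simp only [PMF.integral_eq_sum, weightPMF, PMF.ofFintype_apply, ENNReal.toReal_ofReal (hp _)]

lemma cvar_weightPMF [MeasurableSpace ι] [MeasurableSingletonClass ι] (hp : ∀ i, 0 ≤ p i)
    (hsum : ∑ i, p i = 1) (α : ℝ) (L : ι → ℝ) :
    cvar (weightPMF hp hsum).toMeasure α L =
      sInf (Set.range fun θ : ℝ ↦ θ + (1 - α)⁻¹ * ∑ i, p i * max (L i - θ) 0) := by
  simp only [cvar, rockafellarUryasev, integral_weightPMF, smul_eq_mul, iInf]

end FiniteScenarios

/-- Subadditivity of CVaR: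
`CVaR_α(L¹ + L²) ≤ CVaR_α(L¹) + CVaR_α(L²)`. -/
theorem cvar_subadditive
    (N : ℕ) (p : Fin N → ℝ) (L₁ L₂ : Fin N → ℝ) (α : ℝ)
    (hp : ∀ ω, 0 ≤ p ω) (hpsum : ∑ ω, p ω = 1)
    (hα : 0 ≤ α ∧ α < 1) :
    sInf (Set.range fun θ : ℝ =>
        θ + (1 - α)⁻¹ * ∑ ω, p ω * max ((L₁ ω + L₂ ω) - θ) 0) ≤
      sInf (Set.range fun θ : ℝ =>
          θ + (1 - α)⁻¹ * ∑ ω, p ω * max (L₁ ω - θ) 0) +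
        sInf (Set.range fun θ : ℝ =>
          θ + (1 - α)⁻¹ * ∑ ω, p ω * max (L₂ ω - θ) 0) := by
  simpa only [cvar_weightPMF] using cvar_subadditive_general
    (μ := (weightPMF hp hpsum).toMeasure) hα.1 hα.2 (.of_finite (f := L₁)) (.of_finite (f := L₂))
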